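/- For every δ > 0 there exists ε with 0 < ε < δ such that D_ε is a good joint probability matrix. -/

import Mathlib

open scoped BigOperators Classical

noncomputable section

/-- Probability of an event `E` under a distribution `μ` on a finite sample space `Ω`. -/
def pr {Ω : Type} [Fintype Ω] (μ : Ω → ℝ) (E : Ω → Prop) : ℝ :=
  ∑ ω, if E ω then μ ω else 0

/-- `μ` is a probability distribution on the finite space `Ω`. -/
def IsProb {Ω : Type} [Fintype Ω] (μ : Ω → ℝ) : Prop :=
  (∀ ω, 0 ≤ μ ω) ∧ ∑ ω, μ ω = 1

/-- Shannon entropy (base 2) of a random variable `α` on a finite probability space. -/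
def ent {Ω A : Type} [Fintype Ω] (μ : Ω → ℝ) (α : Ω → A) : ℝ :=
  -∑ a ∈ Finset.univ.image α,
      pr μ (fun ω => α ω = a) * Real.logb 2 (pr μ (fun ω => α ω = a))

/-- Conditional entropy `H(α | β)`. -/
def condEnt {Ω A B : Type} [Fintype Ω] (μ : Ω → ℝ) (α : Ω → A) (β : Ω → B) : ℝ :=
  ent μ (fun ω => (α ω, β ω)) - ent μ β

/-- Mutual information `I(α : β)`. -/
def mutualInfo {Ω A B : Type} [Fintype Ω] (μ : Ω → ℝ) (α : Ω → A) (β : Ω → B) : ℝ :=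
  ent μ α + ent μ β - ent μ (fun ω => (α ω, β ω))

/-- Conditional mutual information `I(α : β | γ)`. -/
def condMutualInfo {Ω A B C : Type} [Fintype Ω] (μ : Ω → ℝ)
    (α : Ω → A) (β : Ω → B) (γ : Ω → C) : ℝ :=
  condEnt μ α γ + condEnt μ β γ - condEnt μ (fun ω => (α ω, β ω)) γ

/-- Independence of two random variables. -/
def Indep {Ω A B : Type} [Fintype Ω] (μ : Ω → ℝ) (α : Ω → A) (β : Ω → B) : Prop :=
  ∀ (a : A) (b : B),
    pr μ (fun ω => α ω = a ∧ β ω = b) =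
      pr μ (fun ω => α ω = a) * pr μ (fun ω => β ω = b)

/-- Auxiliary form of "conditionally independent of order `k`" (explicit `Fintype`):
`α` and `β` are conditionally independent of order `0` if they are independent,
and of order `k + 1` if on some finite probability space there are random variables
`α₀, β₀, α*, β*` such that `(α₀, β₀)` has the same joint distribution as `(α, β)`,
`I(α₀ : β₀ | α*) = 0`, `I(α₀ : β₀ | β*) = 0`, and `α*, β*` are conditionally
independent of order `k`. -/
def CondIndepOrderAux : ℕ → (Ω A B : Type) → Fintype Ω → (Ω → ℝ) → (Ω → A) → (Ω → B) → Prop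
  | 0, _Ω, _A, _B, iΩ, μ, α, β => @Indep _ _ _ iΩ μ α β
  | k+1, _Ω, A, B, iΩ, μ, α, β =>
      ∃ (Ω' A' B' : Type) (iΩ' : Fintype Ω') (μ' : Ω' → ℝ)
        (α₀ : Ω' → A) (β₀ : Ω' → B) (αs : Ω' → A') (βs : Ω' → B'),
        @IsProb _ iΩ' μ' ∧
        (∀ (a : A) (b : B),
          @pr _ iΩ' μ' (fun ω => α₀ ω = a ∧ β₀ ω = b) =
            @pr _ iΩ μ (fun ω => α ω = a ∧ β ω = b)) ∧
        @condMutualInfo _ _ _ _ iΩ' μ' α₀ β₀ αs = 0 ∧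
        @condMutualInfo _ _ _ _ iΩ' μ' α₀ β₀ βs = 0 ∧
        CondIndepOrderAux k Ω' A' B' iΩ' μ' αs βs

/-- Random variables `α` and `β` on a finite probability space are
conditionally independent of order `k`. -/
def CondIndepOrder {Ω A B : Type} [iΩ : Fintype Ω]
    (μ : Ω → ℝ) (α : Ω → A) (β : Ω → B) (k : ℕ) : Prop :=
  CondIndepOrderAux k Ω A B iΩ μ α β

/-- An `m × n` joint probability matrix: nonnegative entries summing to `1`. -/
def IsJointProbMatrix {m n : ℕ} (M : Matrix (Fin m) (Fin n) ℝ) : Prop :=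
  (∀ i j, 0 ≤ M i j) ∧ ∑ i, ∑ j, M i j = 1

/-- `M` is the joint probability matrix of the pair `(α, β)`. -/
def IsJointMatrixOf {Ω : Type} [Fintype Ω] {m n : ℕ} (M : Matrix (Fin m) (Fin n) ℝ)
    (μ : Ω → ℝ) (α : Ω → Fin m) (β : Ω → Fin n) : Prop :=
  ∀ i j, M i j = pr μ (fun ω => α ω = i ∧ β ω = j)

/-- `M` is a block matrix: rows and columns can be partitioned into two nonempty
parts so that the two diagonal blocks each contain a nonzero element and all
entries outside the diagonal blocks vanish. -/
def IsBlockMatrix {m n : ℕ} (M : Matrix (Fin m) (Fin n) ℝ) : Prop :=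
  ∃ (I₁ : Finset (Fin m)) (J₁ : Finset (Fin n)),
    I₁.Nonempty ∧ I₁ᶜ.Nonempty ∧ J₁.Nonempty ∧ J₁ᶜ.Nonempty ∧
    (∃ i ∈ I₁, ∃ j ∈ J₁, M i j ≠ 0) ∧
    (∃ i ∈ I₁ᶜ, ∃ j ∈ J₁ᶜ, M i j ≠ 0) ∧
    (∀ i j, ((i ∈ I₁ ∧ j ∈ J₁ᶜ) ∨ (i ∈ I₁ᶜ ∧ j ∈ J₁)) → M i j = 0)

/-- `M` is a good matrix: the joint probability matrix of some pair of
conditionally independent random variables (of some finite order). -/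
def IsGoodMatrix {m n : ℕ} (M : Matrix (Fin m) (Fin n) ℝ) : Prop :=
  ∃ (Ω : Type) (iΩ : Fintype Ω) (μ : Ω → ℝ) (α : Ω → Fin m) (β : Ω → Fin n) (k : ℕ),
    @IsProb _ iΩ μ ∧ @IsJointMatrixOf _ iΩ _ _ M μ α β ∧
    @CondIndepOrder _ _ _ iΩ μ α β k

/-- A stochastic matrix: nonnegative entries, all row sums equal to `1`. -/
def IsStochastic {m n : ℕ} (A : Matrix (Fin m) (Fin n) ℝ) : Prop :=
  (∀ i j, 0 ≤ A i j) ∧ ∀ i, ∑ j, A i j = 1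

/-- The matrix `D_ε`: diagonal entries `1/2 - ε`, off-diagonal entries `ε`. -/
def Dmat (ε : ℝ) : Matrix (Fin 2) (Fin 2) ℝ :=
  fun i j => if i = j then 1/2 - ε else ε

/-- The distribution of `n` i.i.d. trials, each distributed according to `μ`. -/
def iidMeasure {Ω : Type} [Fintype Ω] (μ : Ω → ℝ) (n : ℕ) : (Fin n → Ω) → ℝ :=
  fun ωv => ∏ i, μ (ωv i)

/-- The sequence of `n` coordinatewise copies of a random variable. -/
def iidRV {Ω A : Type} (α : Ω → A) (n : ℕ) : (Fin n → Ω) → (Fin n → A) :=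
  fun ωv i => α (ωv i)

/-- `(u, v, w)` belongs to the rate region of the pair `(α, β)`. -/
def InRateRegion {Ω A B : Type} [Fintype Ω] (μ : Ω → ℝ) (α : Ω → A) (β : Ω → B)
    (u v w : ℝ) : Prop :=
  0 ≤ u ∧ 0 ≤ v ∧ 0 ≤ w ∧
  ∀ ε > (0:ℝ), ∀ δ > (0:ℝ), ∃ n₀ : ℕ, ∀ n ≥ n₀,
    ∃ (t : (Fin n → A) × (Fin n → B) → (Fin ⌊(u + δ) * n⌋₊ → Bool))
      (f : (Fin n → A) × (Fin n → B) → (Fin ⌊(v + δ) * n⌋₊ → Bool))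
      (g : (Fin n → A) × (Fin n → B) → (Fin ⌊(w + δ) * n⌋₊ → Bool))
      (r : (Fin ⌊(u + δ) * n⌋₊ → Bool) × (Fin ⌊(v + δ) * n⌋₊ → Bool) → (Fin n → A))
      (s : (Fin ⌊(u + δ) * n⌋₊ → Bool) × (Fin ⌊(w + δ) * n⌋₊ → Bool) → (Fin n → B)),
      pr (iidMeasure μ n) (fun ωv =>
          r (t (iidRV α n ωv, iidRV β n ωv), f (iidRV α n ωv, iidRV β n ωv)) = iidRV α n ωv)
        > 1 - ε ∧
      pr (iidMeasure μ n) (fun ωv =>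
          s (t (iidRV α n ωv, iidRV β n ωv), g (iidRV α n ωv, iidRV β n ωv)) = iidRV β n ωv)
        > 1 - ε

/-- The support of a matrix: the set of positions of its nonzero entries. -/
def msupport {m n : ℕ} (M : Matrix (Fin m) (Fin n) ℝ) : Set (Fin m × Fin n) :=
  {p | M p.1 p.2 ≠ 0}

/-- An r-matrix: nonnegative entries and rectangular support. -/
def IsRMatrix {m n : ℕ} (M : Matrix (Fin m) (Fin n) ℝ) : Prop :=
  (∀ i j, 0 ≤ M i j) ∧ ∃ (A : Set (Fin m)) (B : Set (Fin n)), msupport M = A ×ˢ B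

/-- An r-decomposition of `M`: an expression of `M` as a finite sum of r-matrices
such that the supports of consecutive summands intersect. -/
def IsRDecomposition {m n : ℕ} (M : Matrix (Fin m) (Fin n) ℝ)
    (l : ℕ) (Ms : Fin l → Matrix (Fin m) (Fin n) ℝ) : Prop :=
  M = ∑ i, Ms i ∧ (∀ i, IsRMatrix (Ms i)) ∧
  ∀ (i : ℕ) (h : i + 1 < l),
    (msupport (Ms ⟨i, Nat.lt_of_succ_lt h⟩) ∩ msupport (Ms ⟨i + 1, h⟩)).Nonempty

end

/-!
Given bits `(s, t)` of law `D_ε`, choose bits `(a, b)` as follows: if `s = t`, put `a = b = s`; if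
`s ≠ t`, let `(a, b)` be uniform on the equal pairs with probability `ε` and uniform on the unequal
pairs otherwise. Given `s` alone, and likewise given `t` alone, `a` and `b` are then independent
copies of that bit, each flipped with probability `ε`. So `I(a : b | s) = I(a : b | t) = 0`, while
`a ≠ b` has probability `2ε(1 - ε)`. Hence if `D_ε` is good, so is `D_{ε(1 - ε)}`. Starting from
`D_{1/4}`, the law of two independent fair bits, and iterating, `ε` tends to `0`, because
`1 / (ε(1 - ε)) = 1 / ε + 1 / (1 - ε) > 1 / ε + 1`.
-/

section Probability

variable {Ω A B C : Type} [Fintype Ω] {μ : Ω → ℝ}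

theorem pr_nonneg (hμ : ∀ ω, 0 ≤ μ ω) (E : Ω → Prop) : 0 ≤ pr μ E :=
  Finset.sum_nonneg fun ω _ => ite_nonneg (hμ ω) le_rfl

theorem pr_pos (hμ : ∀ ω, 0 ≤ μ ω) {E : Ω → Prop} {ω : Ω} (hE : E ω) (hω : 0 < μ ω) :
    0 < pr μ E :=
  Finset.sum_pos' (fun ω' _ => ite_nonneg (hμ ω') le_rfl)
    ⟨ω, Finset.mem_univ ω, by rwa [if_pos hE]⟩

theorem pr_eq_sum_pr_and (μ : Ω → ℝ) (E : Ω → Prop) {β : Ω → B} {S : Finset B}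
    (hS : ∀ ω, β ω ∈ S) : pr μ E = ∑ b ∈ S, pr μ (fun ω => β ω = b ∧ E ω) := by
  unfold pr
  rw [Finset.sum_comm]
  refine Finset.sum_congr rfl fun ω _ => ?_
  by_cases hE : E ω <;> simp [hE, hS ω]

theorem ent_eq_neg_sum_mul_logb_pr (μ : Ω → ℝ) (α : Ω → A) :
    ent μ α = -∑ ω, μ ω * Real.logb 2 (pr μ (fun ω' => α ω' = α ω)) := by
  unfold ent
  rw [← Finset.sum_fiberwise_of_maps_to fun ω hω => Finset.mem_image_of_mem α hω]
  refine congrArg Neg.neg (Finset.sum_congr rfl fun a _ => ?_)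
  have pr_eq_sum_fiber : pr μ (fun ω => α ω = a) = ∑ ω with α ω = a, μ ω :=
    (Finset.sum_filter _ _).symm
  nth_rewrite 1 [pr_eq_sum_fiber]
  rw [Finset.sum_mul]
  refine Finset.sum_congr rfl fun ω hω => ?_
  rw [(Finset.mem_filter.mp hω).2]

theorem condMutualInfo_eq_zero_of_pr_mul_pr_eq (hμ : ∀ ω, 0 ≤ μ ω)
    {α : Ω → A} {β : Ω → B} {γ : Ω → C}
    (h : ∀ a b c,
      pr μ (fun ω => α ω = a ∧ β ω = b ∧ γ ω = c) * pr μ (fun ω => γ ω = c) =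
        pr μ (fun ω => α ω = a ∧ γ ω = c) * pr μ (fun ω => β ω = b ∧ γ ω = c)) :
    condMutualInfo μ α β γ = 0 := by
  have logb_balance (ω : Ω) :
      μ ω * Real.logb 2 (pr μ (fun ω' => α ω' = α ω ∧ β ω' = β ω ∧ γ ω' = γ ω)) +
          μ ω * Real.logb 2 (pr μ (fun ω' => γ ω' = γ ω)) =
        μ ω * Real.logb 2 (pr μ (fun ω' => α ω' = α ω ∧ γ ω' = γ ω)) +
          μ ω * Real.logb 2 (pr μ (fun ω' => β ω' = β ω ∧ γ ω' = γ ω)) := by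
    rcases (hμ ω).eq_or_lt with hω | hω
    · simp [← hω]
    · have pr_ne_zero {E : Ω → Prop} (hE : E ω) : pr μ E ≠ 0 := (pr_pos hμ hE hω).ne'
      rw [← mul_add, ← mul_add, ← Real.logb_mul, ← Real.logb_mul, h] <;>
        exact pr_ne_zero (by simp)
  have sum_balance := Fintype.sum_congr _ _ logb_balance
  rw [Finset.sum_add_distrib, Finset.sum_add_distrib] at sum_balance
  simp only [condMutualInfo, condEnt, ent_eq_neg_sum_mul_logb_pr, Prod.mk.injEq, and_assoc]
  linarith

theorem condMutualInfo_eq_zero_of_pr_eq_mul (hμ : ∀ ω, 0 ≤ μ ω)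
    {α : Ω → A} {β : Ω → B} {γ : Ω → C} (f : A → C → ℝ) (g : B → C → ℝ)
    (h : ∀ a b c, pr μ (fun ω => α ω = a ∧ β ω = b ∧ γ ω = c) = f a c * g b c) :
    condMutualInfo μ α β γ = 0 := by
  have hα (ω : Ω) : α ω ∈ Finset.univ.image α := Finset.mem_image_of_mem α (Finset.mem_univ ω)
  have hβ (ω : Ω) : β ω ∈ Finset.univ.image β := Finset.mem_image_of_mem β (Finset.mem_univ ω)
  have pr_left (a : A) (c : C) :
      pr μ (fun ω => α ω = a ∧ γ ω = c) = f a c * ∑ b ∈ Finset.univ.image β, g b c := by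
    rw [pr_eq_sum_pr_and μ _ hβ]
    simp_rw [and_left_comm (a := β _ = _), h, Finset.mul_sum]
  have pr_right (b : B) (c : C) :
      pr μ (fun ω => β ω = b ∧ γ ω = c) = (∑ a ∈ Finset.univ.image α, f a c) * g b c := by
    rw [pr_eq_sum_pr_and μ _ hα]
    simp_rw [h, Finset.sum_mul]
  have pr_given (c : C) : pr μ (fun ω => γ ω = c) =
      (∑ a ∈ Finset.univ.image α, f a c) * ∑ b ∈ Finset.univ.image β, g b c := by
    rw [pr_eq_sum_pr_and μ _ hα]
    simp_rw [pr_left, Finset.sum_mul]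
  refine condMutualInfo_eq_zero_of_pr_mul_pr_eq hμ fun a b c => ?_
  rw [h, pr_left, pr_right, pr_given]
  ring

end Probability

section JointLaw

variable {Ω Ω' A B : Type} [Fintype Ω] [Fintype Ω']
  {μ : Ω → ℝ} {μ' : Ω' → ℝ} {α : Ω → A} {β : Ω → B} {α' : Ω' → A} {β' : Ω' → B}

theorem Indep.of_joint_eq (h : Indep μ α β)
    (hlaw : ∀ a b, pr μ' (fun ω => α' ω = a ∧ β' ω = b) = pr μ (fun ω => α ω = a ∧ β ω = b)) :
    Indep μ' α' β' := by
  have pr_left (a : A) : pr μ' (fun ω => α' ω = a) = pr μ (fun ω => α ω = a) := by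
    let S := Finset.univ.image β ∪ Finset.univ.image β'
    have hβ (ω : Ω) : β ω ∈ S := by simp [S]
    have hβ' (ω : Ω') : β' ω ∈ S := by simp [S]
    rw [pr_eq_sum_pr_and μ' _ hβ', pr_eq_sum_pr_and μ _ hβ]
    simp_rw [and_comm (b := _ = a), hlaw]
  have pr_right (b : B) : pr μ' (fun ω => β' ω = b) = pr μ (fun ω => β ω = b) := by
    let S := Finset.univ.image α ∪ Finset.univ.image α'
    have hα (ω : Ω) : α ω ∈ S := by simp [S]
    have hα' (ω : Ω') : α' ω ∈ S := by simp [S]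
    rw [pr_eq_sum_pr_and μ' _ hα', pr_eq_sum_pr_and μ _ hα]
    exact Finset.sum_congr rfl fun a _ => hlaw a b
  intro a b
  rw [hlaw, pr_left, pr_right, h]

theorem CondIndepOrder.of_joint_eq {k : ℕ} (h : CondIndepOrder μ α β k)
    (hlaw : ∀ a b, pr μ' (fun ω => α' ω = a ∧ β' ω = b) = pr μ (fun ω => α ω = a ∧ β ω = b)) :
    CondIndepOrder μ' α' β' k := by
  cases k with
  | zero => exact Indep.of_joint_eq h hlaw
  | succ k =>
    obtain ⟨Ω₀, A₀, B₀, hΩ₀, ν, α₀, β₀, αs, βs, hν, hlaw₀, hrest⟩ := h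
    exact ⟨Ω₀, A₀, B₀, hΩ₀, ν, α₀, β₀, αs, βs, hν,
      fun a b => (hlaw₀ a b).trans (hlaw a b).symm, hrest⟩

end JointLaw

section GoodMatrix

variable {m n m' n' : ℕ} {M : Matrix (Fin m) (Fin n) ℝ} {N : Matrix (Fin m') (Fin n') ℝ}

theorem IsGoodMatrix.nonneg (hM : IsGoodMatrix M) (i : Fin m) (j : Fin n) : 0 ≤ M i j := by
  obtain ⟨Ω, _, μ, α, β, k, hμ, hjoint, -⟩ := hM
  rw [hjoint i j]
  exact pr_nonneg hμ.1 _

theorem isGoodMatrix_vecMulVec {p : Fin m → ℝ} {q : Fin n → ℝ} (hp : IsProb p) (hq : IsProb q) :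
    IsGoodMatrix (Matrix.vecMulVec p q) := by
  let μ : Fin m × Fin n → ℝ := fun ω => p ω.1 * q ω.2
  have hμ : IsProb μ :=
    ⟨fun ω => mul_nonneg (hp.1 _) (hq.1 _), by
      rw [Fintype.sum_prod_type, ← Fintype.sum_mul_sum, hp.2, hq.2, one_mul]⟩
  have pr_joint (i : Fin m) (j : Fin n) :
      pr μ (fun ω => ω.1 = i ∧ ω.2 = j) = p i * q j := by
    simp [pr, μ, Fintype.sum_prod_type, ite_and]
  have pr_fst (i : Fin m) : pr μ (fun ω => ω.1 = i) = p i := by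
    rw [pr_eq_sum_pr_and μ _ fun ω => Finset.mem_univ ω.2]
    simp_rw [and_comm (b := _ = i), pr_joint, ← Finset.mul_sum, hq.2, mul_one]
  have pr_snd (j : Fin n) : pr μ (fun ω => ω.2 = j) = q j := by
    rw [pr_eq_sum_pr_and μ _ fun ω => Finset.mem_univ ω.1]
    simp_rw [pr_joint, ← Finset.sum_mul, hp.2, one_mul]
  have hindep : Indep μ Prod.fst Prod.snd := fun i j => by rw [pr_joint, pr_fst, pr_snd]
  exact ⟨_, inferInstance, μ, Prod.fst, Prod.snd, 0, hμ, fun i j => (pr_joint i j).symm, hindep⟩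

theorem IsGoodMatrix.of_condMutualInfo_eq_zero {Ω : Type} [Fintype Ω] {μ : Ω → ℝ}
    {α : Ω → Fin m} {β : Ω → Fin n} {αs : Ω → Fin m'} {βs : Ω → Fin n'} (hN : IsGoodMatrix N)
    (hμ : IsProb μ) (hNs : IsJointMatrixOf N μ αs βs) (hMs : IsJointMatrixOf M μ α β)
    (hαs : condMutualInfo μ α β αs = 0) (hβs : condMutualInfo μ α β βs = 0) :
    IsGoodMatrix M := by
  obtain ⟨Ω₀, _, μ₀, α₀, β₀, k, -, hN₀, hk⟩ := hN
  have hks : CondIndepOrder μ αs βs k :=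
    hk.of_joint_eq fun i j => (hNs i j).symm.trans (hN₀ i j)
  exact ⟨Ω, inferInstance, μ, α, β, k + 1, hμ, hMs, Ω, Fin m', Fin n', inferInstance, μ,
    α, β, αs, βs, hμ, fun _ _ => rfl, hαs, hβs, hks⟩

end GoodMatrix

/-- The joint law of the bits `(a, b, s, t)` that carries goodness from `D_ε` to `D_{ε(1 - ε)}`:
the pair `(s, t)` has law `D_ε`, the conditional law of `(a, b)` is the point mass at `(s, s)` if
`s = t`, and it is `D_{(1 - ε)/2}` if `s ≠ t`. -/
noncomputable def flipCoupling (ε : ℝ) : Fin 2 × Fin 2 × Fin 2 × Fin 2 → ℝ :=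
  fun (a, b, s, t) =>
    Dmat ε s t * if s = t then (if a = s ∧ b = s then 1 else 0) else Dmat ((1 - ε) / 2) a b

section FlipCoupling

variable {ε : ℝ}

theorem isProb_flipCoupling (hε₀ : 0 ≤ ε) (hε : ε ≤ 1 / 2) : IsProb (flipCoupling ε) := by
  refine ⟨fun (a, b, s, t) => ?_, ?_⟩
  · unfold flipCoupling Dmat
    refine mul_nonneg ?_ ?_ <;> split_ifs <;> linarith
  · simp only [Fintype.sum_prod_type, Fin.sum_univ_two, flipCoupling, Dmat]
    grind

theorem isJointMatrixOf_flipCoupling_source (ε : ℝ) :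
    IsJointMatrixOf (Dmat ε) (flipCoupling ε) (fun (_, _, s, _) => s) (fun (_, _, _, t) => t) := by
  intro s t
  simp only [pr, Fintype.sum_prod_type, Fin.sum_univ_two, flipCoupling, Dmat]
  grind

theorem isJointMatrixOf_flipCoupling_target (ε : ℝ) :
    IsJointMatrixOf (Dmat (ε * (1 - ε))) (flipCoupling ε)
      (fun (a, _, _, _) => a) (fun (_, b, _, _) => b) := by
  intro a b
  simp only [pr, Fintype.sum_prod_type, Fin.sum_univ_two, flipCoupling, Dmat]
  grind

theorem pr_flipCoupling_left (ε : ℝ) (a b s : Fin 2) :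
    pr (flipCoupling ε) (fun (a', b', s', _) => a' = a ∧ b' = b ∧ s' = s) =
      Dmat (ε / 2) a s * (2 * Dmat (ε / 2) b s) := by
  simp only [pr, Fintype.sum_prod_type, Fin.sum_univ_two, flipCoupling, Dmat]
  fin_cases a <;> fin_cases b <;> fin_cases s <;> grind

theorem condMutualInfo_flipCoupling_left (hε₀ : 0 ≤ ε) (hε : ε ≤ 1 / 2) :
    condMutualInfo (flipCoupling ε) (fun (a, _, _, _) => a) (fun (_, b, _, _) => b)
      (fun (_, _, s, _) => s) = 0 :=
  condMutualInfo_eq_zero_of_pr_eq_mul (isProb_flipCoupling hε₀ hε).1 _ _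
    (pr_flipCoupling_left ε)

theorem pr_flipCoupling_right (ε : ℝ) (a b t : Fin 2) :
    pr (flipCoupling ε) (fun (a', b', _, t') => a' = a ∧ b' = b ∧ t' = t) =
      Dmat (ε / 2) a t * (2 * Dmat (ε / 2) b t) := by
  simp only [pr, Fintype.sum_prod_type, Fin.sum_univ_two, flipCoupling, Dmat]
  fin_cases a <;> fin_cases b <;> fin_cases t <;> grind

theorem condMutualInfo_flipCoupling_right (hε₀ : 0 ≤ ε) (hε : ε ≤ 1 / 2) :
    condMutualInfo (flipCoupling ε) (fun (a, _, _, _) => a) (fun (_, b, _, _) => b)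
      (fun (_, _, _, t) => t) = 0 :=
  condMutualInfo_eq_zero_of_pr_eq_mul (isProb_flipCoupling hε₀ hε).1 _ _
    (pr_flipCoupling_right ε)

end FlipCoupling

theorem inv_add_one_lt_inv_mul_one_sub {K : Type*} [Field K] [LinearOrder K]
    [IsStrictOrderedRing K] {x : K} (hx₀ : 0 < x) (hx₁ : x < 1) :
    x⁻¹ + 1 < (x * (1 - x))⁻¹ := by
  have hx' : 0 < 1 - x := sub_pos.mpr hx₁
  calc x⁻¹ + 1 < x⁻¹ + (1 - x)⁻¹ := by
        gcongr
        exact (one_lt_inv₀ hx').mpr (by linarith)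
    _ = (x * (1 - x))⁻¹ := by
        field_simp
        ring

section Dmat

variable {ε : ℝ}

theorem nonneg_of_isGoodMatrix_Dmat (h : IsGoodMatrix (Dmat ε)) : 0 ≤ ε := by
  simpa [Dmat] using h.nonneg 0 1

theorem le_half_of_isGoodMatrix_Dmat (h : IsGoodMatrix (Dmat ε)) : ε ≤ 1 / 2 := by
  simpa [Dmat] using h.nonneg 0 0

theorem isGoodMatrix_Dmat_one_quarter : IsGoodMatrix (Dmat (1 / 4)) := by
  have fair_bit : IsProb (fun _ : Fin 2 => (1 / 2 : ℝ)) := ⟨fun _ => by norm_num, by norm_num⟩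
  have Dmat_eq : Dmat (1 / 4) = Matrix.vecMulVec (fun _ => 1 / 2) (fun _ => 1 / 2) := by
    ext i j
    norm_num [Dmat, Matrix.vecMulVec_apply]
  exact Dmat_eq ▸ isGoodMatrix_vecMulVec fair_bit fair_bit

theorem isGoodMatrix_Dmat_mul_one_sub (h : IsGoodMatrix (Dmat ε)) :
    IsGoodMatrix (Dmat (ε * (1 - ε))) :=
  have hε₀ := nonneg_of_isGoodMatrix_Dmat h
  have hε := le_half_of_isGoodMatrix_Dmat h
  h.of_condMutualInfo_eq_zero (isProb_flipCoupling hε₀ hε)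
    (isJointMatrixOf_flipCoupling_source ε) (isJointMatrixOf_flipCoupling_target ε)
    (condMutualInfo_flipCoupling_left hε₀ hε) (condMutualInfo_flipCoupling_right hε₀ hε)

theorem exists_natCast_lt_inv_isGoodMatrix_Dmat (n : ℕ) :
    ∃ ε : ℝ, 0 < ε ∧ n < ε⁻¹ ∧ IsGoodMatrix (Dmat ε) := by
  induction n with
  | zero => exact ⟨1 / 4, by norm_num, by norm_num, isGoodMatrix_Dmat_one_quarter⟩
  | succ n ih =>
    obtain ⟨ε, hε₀, hn, hgood⟩ := ih
    have hε₁ : ε < 1 := (le_half_of_isGoodMatrix_Dmat hgood).trans_lt one_half_lt_one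
    refine ⟨ε * (1 - ε), mul_pos hε₀ (sub_pos.mpr hε₁), ?_, isGoodMatrix_Dmat_mul_one_sub hgood⟩
    calc ((n + 1 : ℕ) : ℝ) = n + 1 := Nat.cast_succ n
      _ < ε⁻¹ + 1 := by gcongr
      _ < (ε * (1 - ε))⁻¹ := inv_add_one_lt_inv_mul_one_sub hε₀ hε₁

end Dmat

/-- For every `δ > 0` there exists `ε` with `0 < ε < δ` such that
`D_ε` is a good joint probability matrix. -/
theorem exists_small_good_Dmat (δ : ℝ) (hδ : 0 < δ) :
    ∃ ε : ℝ, 0 < ε ∧ ε < δ ∧ IsGoodMatrix (Dmat ε) := by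
  obtain ⟨n, hn⟩ := exists_nat_gt δ⁻¹
  obtain ⟨ε, hε₀, hnε, hgood⟩ := exists_natCast_lt_inv_isGoodMatrix_Dmat n
  exact ⟨ε, hε₀, (inv_lt_inv₀ hδ hε₀).mp (hn.trans hnε), hgood⟩
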